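/- (Theorem 1 of the paper.) Let U ⊆ E × F be open and convex, let g : E × F → G be C² on U, and let p = (x₀, y₀) ∈ U with s₀ = g(x₀, y₀). Let J_y : F →L[ℝ] G be the partial Jacobian of g at p with respect to the second variable. Then for every M ≥ 0 there exist constants C > 0 and δ > 0 such that for every finite index set N and family of points (x_j, y_j) ∈ U, j ∈ N, satisfying (i) ‖(x_j, y_j) − (x₀, y₀)‖ ≤ δ and ‖x_j − x₀‖ ≤ M · ‖y_j − y₀‖² for all j ∈ N (Assumption 1), and (ii) Σ_{j ∈ N} outer(y_j − y₀) = id_F (Assumption 2: locally isotropic empirical covariance of the sensor-specific variable), one has ‖Σ_{j ∈ N} outer(g(x_j, y_j) − s₀) − J_y ∘ J_y^*‖ ≤ C · Σ_{j ∈ N} ‖y_j − y₀‖³ (operator norm). -/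

import Mathlib

/-!
Write `v = y - y₀` and `q = (x, y)`.  Since `g` is `C²`, its derivative is Lipschitz near
`p = (x₀, y₀)`, so the mean value inequality gives `g q - g p = Dg(p) (q - p) + O(‖q - p‖²)`
(`exists_taylor_two_bound`).  The assumption `‖x - x₀‖ ≤ M ‖v‖²` makes the `x`-part of the linear
term quadratic in `v`, hence `g q - s₀ = J_y v + e` with `‖e‖ ≤ A ‖v‖²`.  As `outer` is quadratic,
`outer (J_y v + e)` differs from `outer (J_y v)` by `O(‖v‖³)` when `‖v‖ ≤ 1`
(`norm_outer_sub_outer_le`).  Finally `outer (J_y v) = J_y ∘ outer v ∘ J_y*`, and summing over the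
samples the isotropy assumption turns `∑ outer (J_y v)` into `J_y ∘ J_y*`.
-/

/-- The rank-one outer product operator `v vᵀ : w ↦ ⟪v, w⟫ • v`. -/
noncomputable def outer {G : Type*} [NormedAddCommGroup G] [InnerProductSpace ℝ G]
    (v : G) : G →L[ℝ] G :=
  (innerSL ℝ v).smulRight v

/-- Second-order Taylor bound around `p` with a quadratic remainder. -/
lemma exists_taylor_two_bound {V G : Type*} [NormedAddCommGroup V] [NormedSpace ℝ V]
    [NormedAddCommGroup G] [NormedSpace ℝ G] {g : V → G} {p : V} (hg : ContDiffAt ℝ 2 g p) :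
    ∃ K : ℝ, 0 ≤ K ∧ ∃ δ > 0, ∀ q, ‖q - p‖ ≤ δ →
      ‖g q - g p - fderiv ℝ g p (q - p)‖ ≤ K * ‖q - p‖ ^ 2 := by
  have h1 : ContDiffAt ℝ 1 (fderiv ℝ g) p := hg.fderiv_right (by norm_num)
  obtain ⟨K, t, ht, hK⟩ := h1.exists_lipschitzOnWith
  have hd : ∀ᶠ q in nhds p, DifferentiableAt ℝ g q :=
    (hg.eventually (by simp)).mono fun q hq => hq.differentiableAt (by norm_num)
  obtain ⟨δ, hδ, hball⟩ := Metric.nhds_basis_closedBall.mem_iff.1 (Filter.inter_mem ht hd)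
  refine ⟨K, K.2, δ, hδ, fun q hq => ?_⟩
  -- The derivative varies by at most `K * ‖q - p‖` on the closed ball through `q`.
  have hsub : Metric.closedBall p ‖q - p‖ ⊆ Metric.closedBall p δ :=
    Metric.closedBall_subset_closedBall hq
  have hp : p ∈ t := mem_of_mem_nhds ht
  have := (convex_closedBall p ‖q - p‖).norm_image_sub_le_of_norm_hasFDerivWithin_le'
    (f := g) (f' := fderiv ℝ g) (φ := fderiv ℝ g p) (C := K * ‖q - p‖) (x := p) (y := q)
    (fun z hz => (hball (hsub hz)).2.hasFDerivAt.hasFDerivWithinAt)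
    (fun z hz => by
      refine (hK.norm_sub_le (hball (hsub hz)).1 hp).trans ?_
      have := mem_closedBall_iff_norm.1 hz
      gcongr)
    (by simp) (by simp [dist_eq_norm])
  linarith [this]

/-- Local Lipschitz bound for the quadratic map `outer`. -/
lemma norm_outer_sub_outer_le {G : Type*} [NormedAddCommGroup G] [InnerProductSpace ℝ G]
    (a b : G) : ‖outer b - outer a‖ ≤ 2 * ‖a‖ * ‖b - a‖ + ‖b - a‖ ^ 2 := by
  have h : outer b - outer a = (innerSL ℝ a).smulRight (b - a) + (innerSL ℝ (b - a)).smulRight a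
      + (innerSL ℝ (b - a)).smulRight (b - a) := by
    ext w
    simp only [outer, sub_apply, add_apply,
      ContinuousLinearMap.smulRight_apply, innerSL_apply_apply, inner_sub_left]
    module
  rw [h]
  refine (norm_add₃_le).trans (le_of_eq ?_)
  simp only [ContinuousLinearMap.norm_smulRight_apply, innerSL_apply_norm]
  ring

lemma outer_map {F G : Type*} [NormedAddCommGroup F] [InnerProductSpace ℝ F] [CompleteSpace F]
    [NormedAddCommGroup G] [InnerProductSpace ℝ G] [CompleteSpace G] (J : F →L[ℝ] G) (v : F) :
    outer (J v) = J ∘L outer v ∘L ContinuousLinearMap.adjoint J := by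
  ext w
  simp [outer, ContinuousLinearMap.adjoint_inner_right]

/-- Theorem 1 of the paper: under Assumption 1 (AD neighborhoods) and
Assumption 2 (locally isotropic empirical covariance of the sensor-specific
variable), the empirical covariance of the observed samples approximates the
Gram operator `J_y J_yᵀ` up to cubic error. -/
theorem stmt_3
    {E F G : Type*}
    [NormedAddCommGroup E] [InnerProductSpace ℝ E] [FiniteDimensional ℝ E]
    [NormedAddCommGroup F] [InnerProductSpace ℝ F] [FiniteDimensional ℝ F]
    [NormedAddCommGroup G] [InnerProductSpace ℝ G] [FiniteDimensional ℝ G]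
    (U : Set (E × F)) (hUopen : IsOpen U) (hUconv : Convex ℝ U)
    (g : E × F → G) (hg : ContDiffOn ℝ 2 g U)
    (x₀ : E) (y₀ : F) (hp : (x₀, y₀) ∈ U)
    (s₀ : G) (hs₀ : s₀ = g (x₀, y₀))
    (Jy : F →L[ℝ] G)
    (hJy : Jy = (fderiv ℝ g (x₀, y₀)).comp (ContinuousLinearMap.inr ℝ E F))
    (M : ℝ) (hM : 0 ≤ M) :
    ∃ C > 0, ∃ δ > 0, ∀ (ι : Type) (N : Finset ι) (x : ι → E) (y : ι → F),
      (∀ j ∈ N, (x j, y j) ∈ U) →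
      (∀ j ∈ N, ‖((x j, y j) : E × F) - (x₀, y₀)‖ ≤ δ) →
      (∀ j ∈ N, ‖x j - x₀‖ ≤ M * ‖y j - y₀‖ ^ 2) →
      (∑ j ∈ N, outer (y j - y₀)) = ContinuousLinearMap.id ℝ F →
      ‖(∑ j ∈ N, outer (g (x j, y j) - s₀)) -
          Jy ∘L (ContinuousLinearMap.adjoint Jy)‖ ≤
        C * ∑ j ∈ N, ‖y j - y₀‖ ^ 3 := by
  subst hs₀
  obtain ⟨K, hK, δ, hδ, hT⟩ := exists_taylor_two_bound (hg.contDiffAt (hUopen.mem_nhds hp))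
  set L := fderiv ℝ g (x₀, y₀) with hL
  -- The quadratic coefficient of the error `g (x, y) - g (x₀, y₀) - Jy (y - y₀)`.
  set A : ℝ := K * (M + 1) ^ 2 + ‖L‖ * M with hA
  have hA0 : 0 ≤ A := by positivity
  refine ⟨2 * ‖Jy‖ * A + A ^ 2 + 1, by positivity, min δ 1, by positivity, ?_⟩
  intro ι N x y _ hclose hx hiso
  have hJ : Jy ∘L ContinuousLinearMap.adjoint Jy = ∑ j ∈ N, outer (Jy (y j - y₀)) := by
    have h := congrArg (fun T => Jy ∘L T ∘L ContinuousLinearMap.adjoint Jy) hiso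
    simp only [ContinuousLinearMap.id_comp] at h
    rw [← h]
    ext w
    simp [outer_map, -map_sub]
  rw [hJ, ← Finset.sum_sub_distrib, Finset.mul_sum]
  refine norm_sum_le_of_le N fun j hj => ?_
  have hc := hclose j hj
  have hxj := hx j hj
  have hq : ((x j, y j) : E × F) - (x₀, y₀) = (x j - x₀, y j - y₀) := rfl
  have ht := hT (x j, y j) (hc.trans (min_le_left _ _))
  rw [hq] at hc ht
  set u := x j - x₀
  set v := y j - y₀
  have hv0 := norm_nonneg v
  have hv1 : ‖v‖ ≤ 1 := (norm_snd_le (u, v)).trans (hc.trans (min_le_right _ _))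
  have huv : ‖(u, v)‖ ≤ (M + 1) * ‖v‖ := by
    rw [Prod.norm_mk]
    refine max_le (hxj.trans ?_) (by nlinarith)
    nlinarith [mul_nonneg hM (mul_nonneg hv0 (sub_nonneg.2 hv1))]
  have hLuv : L (u, v) = L (u, 0) + Jy v := by
    rw [hJy, ContinuousLinearMap.comp_apply, ContinuousLinearMap.inr_apply, ← map_add]
    simp
  have hLu : ‖L (u, 0)‖ ≤ ‖L‖ * (M * ‖v‖ ^ 2) := by
    refine (L.le_opNorm _).trans ?_
    gcongr
    simpa [Prod.norm_mk] using hxj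
  have he : ‖g (x j, y j) - g (x₀, y₀) - Jy v‖ ≤ A * ‖v‖ ^ 2 := by
    have h : g (x j, y j) - g (x₀, y₀) - Jy v
        = (g (x j, y j) - g (x₀, y₀) - L (u, v)) + L (u, 0) := by
      rw [hLuv]; abel
    rw [h]
    have h2 : K * ‖(u, v)‖ ^ 2 ≤ K * ((M + 1) * ‖v‖) ^ 2 := by gcongr
    refine (norm_add_le_of_le (ht.trans h2) hLu).trans (le_of_eq ?_)
    rw [hA]; ring
  have hJv := Jy.le_opNorm v
  calc _ ≤ 2 * ‖Jy v‖ * ‖g (x j, y j) - g (x₀, y₀) - Jy v‖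
        + ‖g (x j, y j) - g (x₀, y₀) - Jy v‖ ^ 2 := norm_outer_sub_outer_le _ _
    _ ≤ 2 * (‖Jy‖ * ‖v‖) * (A * ‖v‖ ^ 2) + (A * ‖v‖ ^ 2) ^ 2 := by gcongr
    _ = 2 * ‖Jy‖ * A * ‖v‖ ^ 3 + A ^ 2 * (‖v‖ ^ 3 * ‖v‖) := by ring
    _ ≤ 2 * ‖Jy‖ * A * ‖v‖ ^ 3 + A ^ 2 * (‖v‖ ^ 3 * 1) := by gcongr
    _ ≤ _ := by nlinarith [pow_nonneg hv0 3]
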